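/- arXiv:hep-th/9910265 — 5 statements merged into one kernel-verified Lean document; each statement's English description precedes it below -/
import Mathlib

section
/- Let ħ > 0, let N ≥ 2 be an integer, and for γ = (γ₁,…,γ_{N−1}) ∈ ℂ^{N−1} define m(γ) = (πħ)^{−(N−1)(N−2)/2} · ∏_{1≤j<k≤N−1} (γ_j−γ_k)·sinh(π(γ_j−γ_k)/ħ). Then for every index j ∈ {1,…,N−1} and every γ ∈ ℂ^{N−1} with γ_j ≠ γ_m for all m ≠ j, one has m(γ + iħe_j) = (−1)^N · m(γ) · ∏_{m≠j} (γ_j−γ_m+iħ)/(γ_j−γ_m), where e_j is the j-th standard basis vector of ℂ^{N−1}. -/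
/-! The pair factor `t ↦ t sinh (π t / ħ)` is even, so `∏_{j<k}` is really a product over unordered
pairs and the pairs containing a fixed `j` split off as `∏_{m ≠ j}`, whatever the position of `j`
in the order. Only these `N - 2` factors feel the shift of `γⱼ`, and `sinh (z + πi) = -sinh z`
makes each of them contribute `-(γⱼ - γₘ + iħ) / (γⱼ - γₘ)`. -/

open Finset

/-- The analytic continuation to `ℂ^{N-1}` of the inverse Sklyanin measure
`μ⁻¹(γ) = (πħ)^{-(N-1)(N-2)/2} ∏_{j<k} (γⱼ-γₖ) sinh(π(γⱼ-γₖ)/ħ)`. -/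
noncomputable def sklyaninMeasureInv (hbar : ℝ) (N : ℕ) (γ : Fin (N - 1) → ℂ) : ℂ :=
  ((Real.pi * hbar : ℝ) : ℂ) ^ (-(((N - 1) * (N - 2) / 2 : ℕ) : ℤ)) *
    ∏ j : Fin (N - 1), ∏ k ∈ Finset.univ.filter (fun k => j < k),
      (γ j - γ k) * Complex.sinh ((Real.pi : ℂ) * (γ j - γ k) / (hbar : ℂ))

section UnorderedPairs

variable {ι M : Type*} [Fintype ι] [LinearOrder ι] [CommMonoid M]

theorem prod_prod_lt_eq_prod_erase_mul (g : ι → ι → M) (g_symm : ∀ a b, g a b = g b a) (j : ι) :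
    ∏ a, ∏ b with a < b, g a b =
      (∏ m ∈ univ.erase j, g j m) * ∏ a ∈ univ.erase j, ∏ b ∈ univ.erase j with a < b, g a b := by
  have split_row (a : ι) : ∏ b with a < b, g a b =
      (if a < j then g j a else 1) * ∏ b ∈ univ.erase j with a < b, g a b := by
    rw [prod_filter, prod_filter, ← mul_prod_erase univ _ (mem_univ j), g_symm a j]
  have row_j : ∏ b with j < b, g j b = ∏ m ∈ univ.erase j, if j < m then g j m else 1 := by
    rw [split_row, if_neg (lt_irrefl j), one_mul, prod_filter]
  rw [← mul_prod_erase univ _ (mem_univ j), row_j, prod_congr rfl fun a _ => split_row a,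
    prod_mul_distrib, ← mul_assoc, ← prod_mul_distrib]
  congr 1
  refine prod_congr rfl fun m hm => ?_
  rcases (ne_of_mem_erase hm).lt_or_gt with below | above
  · rw [if_neg below.asymm, if_pos below, one_mul]
  · rw [if_pos above, if_neg above.asymm, mul_one]

theorem prod_prod_lt_update {α : Type*} (w : α → α → M) (w_symm : ∀ x y, w x y = w y x)
    (γ : ι → α) (j : ι) (z : α) (c : ι → M)
    (w_eq : ∀ m, m ≠ j → w z (γ m) = c m * w (γ j) (γ m)) :
    ∏ a, ∏ b with a < b, w (Function.update γ j z a) (Function.update γ j z b) =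
      (∏ m ∈ univ.erase j, c m) * ∏ a, ∏ b with a < b, w (γ a) (γ b) := by
  have update_eq {m : ι} (hm : m ∈ univ.erase j) : Function.update γ j z m = γ m :=
    Function.update_of_ne (ne_of_mem_erase hm) z γ
  have pairs_with_j :
      ∏ m ∈ univ.erase j, w (Function.update γ j z j) (Function.update γ j z m) =
        (∏ m ∈ univ.erase j, c m) * ∏ m ∈ univ.erase j, w (γ j) (γ m) := by
    rw [← prod_mul_distrib]
    refine prod_congr rfl fun m hm => ?_
    rw [Function.update_self, update_eq hm, w_eq m (ne_of_mem_erase hm)]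
  have pairs_without_j :
      ∏ a ∈ univ.erase j, ∏ b ∈ univ.erase j with a < b,
          w (Function.update γ j z a) (Function.update γ j z b) =
        ∏ a ∈ univ.erase j, ∏ b ∈ univ.erase j with a < b, w (γ a) (γ b) :=
    prod_congr rfl fun a ha => prod_congr rfl fun b hb => by
      rw [update_eq ha, update_eq (mem_of_mem_filter b hb)]
  rw [prod_prod_lt_eq_prod_erase_mul _ (fun a b => w_symm _ _) j, pairs_with_j, pairs_without_j,
    prod_prod_lt_eq_prod_erase_mul (fun a b => w (γ a) (γ b)) (fun a b => w_symm _ _) j, mul_assoc]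

end UnorderedPairs

/-- The factor `t sinh (π t / h)` that a pair with difference `t = γⱼ - γₖ` contributes to the
inverse Sklyanin measure, allowing complex `h`. -/
noncomputable def sklyaninPairFactor (h t : ℂ) : ℂ :=
  t * Complex.sinh (Real.pi * t / h)

theorem sklyaninPairFactor_even (h : ℂ) : Function.Even (sklyaninPairFactor h) := fun t => by
  simp only [sklyaninPairFactor, mul_neg, neg_div, Complex.sinh_neg, neg_mul, neg_neg]

theorem sklyaninPairFactor_add_I_mul {h t : ℂ} (hh : h ≠ 0) (ht : t ≠ 0) :
    sklyaninPairFactor h (t + Complex.I * h) =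
      -((t + Complex.I * h) / t) * sklyaninPairFactor h t := by
  have shift_arg : Real.pi * (t + Complex.I * h) / h = Real.pi * t / h + Real.pi * Complex.I := by
    field_simp
  rw [sklyaninPairFactor, sklyaninPairFactor, shift_arg, Complex.sinh_add_pi_mul_I]
  field_simp

theorem prod_sklyaninPairFactor_update_add_I_mul {ι : Type*} [Fintype ι] [LinearOrder ι] {h : ℂ}
    (hh : h ≠ 0) (γ : ι → ℂ) (j : ι) (hγ : ∀ m, m ≠ j → γ j ≠ γ m) :
    ∏ a, ∏ b with a < b, sklyaninPairFactor h (Function.update γ j (γ j + Complex.I * h) a -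
        Function.update γ j (γ j + Complex.I * h) b) =
      (-1) ^ (Fintype.card ι - 1) *
        (∏ m ∈ univ.erase j, (γ j - γ m + Complex.I * h) / (γ j - γ m)) *
        ∏ a, ∏ b with a < b, sklyaninPairFactor h (γ a - γ b) := by
  have pairFactor_symm (x y : ℂ) : sklyaninPairFactor h (x - y) = sklyaninPairFactor h (y - x) := by
    rw [← sklyaninPairFactor_even, neg_sub]
  have pairFactor_shift (m : ι) (hm : m ≠ j) :
      sklyaninPairFactor h (γ j + Complex.I * h - γ m) =
        -((γ j - γ m + Complex.I * h) / (γ j - γ m)) * sklyaninPairFactor h (γ j - γ m) := by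
    rw [add_sub_right_comm, sklyaninPairFactor_add_I_mul hh (sub_ne_zero.2 (hγ m hm))]
  rw [prod_prod_lt_update (fun x y => sklyaninPairFactor h (x - y)) pairFactor_symm γ j _ _
    pairFactor_shift, prod_neg, card_erase_of_mem (mem_univ j), card_univ]

/-- Equation (pl4): the difference equation for the inverse Sklyanin measure under
the shift `γ ↦ γ + iħ eⱼ`. -/
theorem sklyaninMeasureInv_shift (hbar : ℝ) (hhbar : 0 < hbar) (N : ℕ) (hN : 2 ≤ N)
    (j : Fin (N - 1)) (γ : Fin (N - 1) → ℂ)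
    (hγ : ∀ m : Fin (N - 1), m ≠ j → γ j ≠ γ m) :
    sklyaninMeasureInv hbar N (Function.update γ j (γ j + Complex.I * (hbar : ℂ)))
      = (-1 : ℂ) ^ N * sklyaninMeasureInv hbar N γ *
        ∏ m ∈ Finset.univ.erase j,
          (γ j - γ m + Complex.I * (hbar : ℂ)) / (γ j - γ m) := by
  have sign : (-1 : ℂ) ^ (Fintype.card (Fin (N - 1)) - 1) = (-1) ^ N := by
    rw [Fintype.card_fin, Nat.sub_sub]
    exact neg_one_pow_congr ((Nat.even_sub hN).trans (iff_true_right even_two))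
  have shift_pairs := prod_sklyaninPairFactor_update_add_I_mul
    (Complex.ofReal_ne_zero.2 hhbar.ne') γ j hγ
  simp only [sign, sklyaninPairFactor] at shift_pairs
  rw [sklyaninMeasureInv, sklyaninMeasureInv, shift_pairs]
  ring
end

section
/- Let ħ > 0, let N be an integer, let t : ℂ → ℂ, and let c₊, c₋ : ℂ → ℂ satisfy the Baxter equation t(γ)·c(γ) = i^{−N}·c(γ+iħ) + i^{N}·c(γ−iħ) for all γ ∈ ℂ. Define the Wronskian W(γ) = c₊(γ)·c₋(γ+iħ) − c₊(γ+iħ)·c₋(γ). Then W(γ+iħ) = (−1)^N · W(γ) for all γ ∈ ℂ. -/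
/-- The Wronskian (wr1) of two solutions of the Baxter equation. -/
noncomputable def baxterWronskian (hbar : ℝ) (cp cm : ℂ → ℂ) (γ : ℂ) : ℂ :=
  cp γ * cm (γ + Complex.I * (hbar : ℂ)) - cp (γ + Complex.I * (hbar : ℂ)) * cm γ

/-- The Casoratian of `f` and `g` with step `h`: the analogue of the Wronskian for difference
equations. `baxterWronskian` is the case of the step `iħ` on `ℂ`. -/
def casoratian {G R : Type*} [Add G] [CommRing R] (h : G) (f g : G → R) (x : G) : R :=
  f x * g (x + h) - f (x + h) * g x

/- Abel's identity for difference equations: eliminating `t` between the two equations leaves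
only Casoratians. -/
theorem mul_casoratian_eq_mul_casoratian_sub {G R : Type*} [AddGroup G] [CommRing R]
    {h x : G} {f g : G → R} {t a b : R}
    (hf : t * f x = b * f (x + h) + a * f (x - h))
    (hg : t * g x = b * g (x + h) + a * g (x - h)) :
    b * casoratian h f g x = a * casoratian h f g (x - h) := by
  simp only [casoratian, sub_add_cancel]
  linear_combination g x * hf - f x * hg

theorem baxterWronskian_shift_general {G K : Type*} [AddGroup G] [Field K]
    {i : K} (hi : i * i = -1) (N : ℤ) {h : G} {t f g : G → K}
    (hf : ∀ x, t x * f x = i ^ (-N) * f (x + h) + i ^ N * f (x - h))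
    (hg : ∀ x, t x * g x = i ^ (-N) * g (x + h) + i ^ N * g (x - h)) (x : G) :
    casoratian h f g (x + h) = (-1) ^ N * casoratian h f g x := by
  have hi_ne : i ≠ 0 := left_ne_zero_of_mul (hi ▸ neg_ne_zero.mpr one_ne_zero)
  have abel : (i ^ N)⁻¹ * casoratian h f g (x + h) = i ^ N * casoratian h f g x := by
    simpa only [zpow_neg, add_sub_cancel_right] using
      mul_casoratian_eq_mul_casoratian_sub (hf (x + h)) (hg (x + h))
  calc
    casoratian h f g (x + h) = i ^ N * (i ^ N * casoratian h f g x) :=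
      (inv_mul_eq_iff_eq_mul₀ (zpow_ne_zero N hi_ne)).mp abel
    _ = (-1) ^ N * casoratian h f g x := by rw [← mul_assoc, ← mul_zpow, hi]

/-- Equation (wr2): quasi-periodicity of the Wronskian of two solutions of the
Baxter equation (fb2). -/
theorem baxterWronskian_shift (hbar : ℝ) (hhbar : 0 < hbar) (N : ℤ) (t cp cm : ℂ → ℂ)
    (hp : ∀ γ : ℂ, t γ * cp γ =
      Complex.I ^ (-N) * cp (γ + Complex.I * (hbar : ℂ)) +
      Complex.I ^ N * cp (γ - Complex.I * (hbar : ℂ)))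
    (hm : ∀ γ : ℂ, t γ * cm γ =
      Complex.I ^ (-N) * cm (γ + Complex.I * (hbar : ℂ)) +
      Complex.I ^ N * cm (γ - Complex.I * (hbar : ℂ))) :
    ∀ γ : ℂ, baxterWronskian hbar cp cm (γ + Complex.I * (hbar : ℂ))
      = (-1 : ℂ) ^ N * baxterWronskian hbar cp cm γ :=
  baxterWronskian_shift_general Complex.I_mul_I N hp hm
end

section
/- Let ħ > 0, let N ≥ 1 be an integer, let λ₁,…,λ_N ∈ ℂ, and set t(γ) = ∏_{k=1}^{N}(γ−λ_k). Let K : ℂ → ℂ satisfy K(γ−iħ) = K(γ) − K(γ+iħ)/(t(γ)·t(γ+iħ)) for all γ ∈ ℂ with t(γ)·t(γ+iħ) ≠ 0. Define d(γ) = ∏_{k=1}^{N} exp(−(iγ/ħ)·log ħ)·Γ(1 − i(γ−λ_k)/ħ) and c(γ) = K(γ)/d(γ). Then for every γ ∈ ℂ such that t(γ) ≠ 0, t(γ+iħ) ≠ 0, and such that for every k ∈ {1,…,N} and every m ∈ {−1,0,1} the number 1 − i(γ + imħ − λ_k)/ħ is not a nonpositive integer, one has t(γ)·c(γ) = i^{−N}·c(γ+iħ)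 + i^{N}·c(γ−iħ). -/
open Finset

/-- `t(γ) = ∏ₖ (γ - λₖ)`. -/
noncomputable def tPoly (N : ℕ) (lam : Fin N → ℂ) (γ : ℂ) : ℂ :=
  ∏ k : Fin N, (γ - lam k)

/-- The Gamma-product denominator `d(γ) = ∏ₖ ħ^{-iγ/ħ} Γ(1 - i(γ-λₖ)/ħ)` of
Gutzwiller's fundamental solution (fs). -/
noncomputable def gammaDenomPlus (hbar : ℝ) (N : ℕ) (lam : Fin N → ℂ) (γ : ℂ) : ℂ :=
  ∏ k : Fin N, Complex.exp (-(Complex.I * γ / (hbar : ℂ)) * (Real.log hbar : ℂ)) *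
    Complex.Gamma (1 - Complex.I * (γ - lam k) / (hbar : ℂ))

/-!
The denominator satisfies `d(γ + iħ) = (-i)^N t(γ + iħ) d(γ)`: the Gamma function contributes its
functional equation, and the exponential turns the resulting factor `1 - i(γ - λₖ)/ħ` into
`-i(γ + iħ - λₖ)`. Dividing by `d` is therefore a gauge transformation, which rescales the three
terms of the recursion for `K` into those of the Baxter equation.
-/

/-- The contribution `ħ^{-iγ/ħ} Γ(1 - i(γ-λ)/ħ)` of a single root `λ` to the denominator
`gammaDenomPlus`, so that the functional equation of `d` can be proved one root at a time. -/
noncomputable def gammaFactorPlus (hbar : ℝ) (root γ : ℂ) : ℂ :=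
  Complex.exp (-(Complex.I * γ / (hbar : ℂ)) * (Real.log hbar : ℂ)) *
    Complex.Gamma (1 - Complex.I * (γ - root) / (hbar : ℂ))

section Shift

open Complex

theorem one_sub_I_mul_add_I_mul_div {h : ℂ} (hh : h ≠ 0) (z : ℂ) :
    1 - I * (z + I * h) / h = 1 - I * z / h + 1 := by
  field_simp
  linear_combination -h * I_mul_I

theorem mul_one_sub_I_mul_div {h : ℂ} (hh : h ≠ 0) (z : ℂ) :
    h * (1 - I * z / h) = -I * (z + I * h) := by
  field_simp
  linear_combination h * I_mul_I

theorem exp_neg_I_mul_add_I_mul_div_mul_log {hbar : ℝ} (hhbar : 0 < hbar) (γ : ℂ) :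
    exp (-(I * (γ + I * hbar) / hbar) * Real.log hbar) =
      hbar * exp (-(I * γ / hbar) * Real.log hbar) := by
  have hbar_ne_zero : (hbar : ℂ) ≠ 0 := ofReal_ne_zero.mpr hhbar.ne'
  have exponent_shift : -(I * (γ + I * hbar) / hbar) = 1 + -(I * γ / hbar) := by
    linear_combination one_sub_I_mul_add_I_mul_div hbar_ne_zero γ
  rw [exponent_shift, add_mul, one_mul, exp_add, ← ofReal_exp, Real.exp_log hhbar]

theorem gammaFactorPlus_add_I_mul {hbar : ℝ} (hhbar : 0 < hbar) {root γ : ℂ}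
    (hγ : γ + I * hbar - root ≠ 0) :
    gammaFactorPlus hbar root (γ + I * hbar) =
      -I * (γ + I * hbar - root) * gammaFactorPlus hbar root γ := by
  have hbar_ne_zero : (hbar : ℂ) ≠ 0 := ofReal_ne_zero.mpr hhbar.ne'
  rw [add_sub_right_comm] at hγ
  have scaled_arg := mul_one_sub_I_mul_div hbar_ne_zero (γ - root)
  have arg_ne_zero : 1 - I * (γ - root) / hbar ≠ 0 :=
    right_ne_zero_of_mul (scaled_arg ▸ mul_ne_zero (neg_ne_zero.mpr I_ne_zero) hγ)
  unfold gammaFactorPlus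
  rw [add_sub_right_comm, ← scaled_arg, exp_neg_I_mul_add_I_mul_div_mul_log hhbar,
    one_sub_I_mul_add_I_mul_div hbar_ne_zero, Gamma_add_one _ arg_ne_zero]
  ring

theorem gammaDenomPlus_add_I_mul {hbar : ℝ} (hhbar : 0 < hbar) {N : ℕ} {lam : Fin N → ℂ} {γ : ℂ}
    (ht : tPoly N lam (γ + I * hbar) ≠ 0) :
    gammaDenomPlus hbar N lam (γ + I * hbar) =
      I ^ (-(N : ℤ)) * tPoly N lam (γ + I * hbar) * gammaDenomPlus hbar N lam γ := by
  have factor_ne_zero := prod_ne_zero_iff.mp ht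
  calc gammaDenomPlus hbar N lam (γ + I * hbar)
      = ∏ k, -I * (γ + I * hbar - lam k) * gammaFactorPlus hbar (lam k) γ :=
        prod_congr rfl fun k hk => gammaFactorPlus_add_I_mul hhbar (factor_ne_zero k hk)
    _ = (-I) ^ N * tPoly N lam (γ + I * hbar) * gammaDenomPlus hbar N lam γ := by
        rw [prod_mul_distrib, prod_mul_distrib, prod_const, card_univ, Fintype.card_fin]
        rfl
    _ = I ^ (-(N : ℤ)) * tPoly N lam (γ + I * hbar) * gammaDenomPlus hbar N lam γ := by
        rw [zpow_neg, zpow_natCast, ← inv_pow, inv_I]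

theorem gammaDenomPlus_ne_zero {hbar : ℝ} {N : ℕ} {lam : Fin N → ℂ} {γ : ℂ}
    (hγ : ∀ k, ∀ n : ℕ, 1 - I * (γ - lam k) / hbar ≠ -n) :
    gammaDenomPlus hbar N lam γ ≠ 0 :=
  prod_ne_zero_iff.mpr fun k _ => mul_ne_zero (exp_ne_zero _) (Gamma_ne_zero (hγ k))

end Shift

theorem baxter_eq_of_recursion_of_gauge {F : Type*} [Field F]
    {a t₁ t₂ K₀ K₁ K₂ d₀ d₁ d₂ : F} (ha : a ≠ 0) (ht₁ : t₁ ≠ 0) (ht₂ : t₂ ≠ 0) (hd₀ : d₀ ≠ 0)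
    (hK : K₀ = K₁ - K₂ / (t₁ * t₂)) (hd₁ : d₁ = a * t₁ * d₀) (hd₂ : d₂ = a * t₂ * d₁) :
    t₁ * (K₁ / d₁) = a * (K₂ / d₂) + a⁻¹ * (K₀ / d₀) := by
  calc t₁ * (K₁ / d₁)
      = a⁻¹ * (K₁ / d₀) := by rw [hd₁]; field_simp
    _ = a⁻¹ * (K₂ / (t₁ * t₂) / d₀) + a⁻¹ * (K₀ / d₀) := by rw [hK]; ring
    _ = a * (K₂ / d₂) + a⁻¹ * (K₀ / d₀) := by rw [hd₂, hd₁]; field_simp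

/-- Gutzwiller's fundamental solution `c₊ = K₊/d` of the one-dimensional Baxter
equation (fb2), given any function `K₊` satisfying the first recursion (ab1a). -/
theorem gutzwiller_solution_plus (hbar : ℝ) (hhbar : 0 < hbar) (N : ℕ) (hN : 1 ≤ N)
    (lam : Fin N → ℂ) (K : ℂ → ℂ)
    (hK : ∀ γ : ℂ, tPoly N lam γ * tPoly N lam (γ + Complex.I * (hbar : ℂ)) ≠ 0 →
      K (γ - Complex.I * (hbar : ℂ)) = K γ -
        K (γ + Complex.I * (hbar : ℂ)) /
          (tPoly N lam γ * tPoly N lam (γ + Complex.I * (hbar : ℂ)))) :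
    ∀ γ : ℂ, tPoly N lam γ ≠ 0 → tPoly N lam (γ + Complex.I * (hbar : ℂ)) ≠ 0 →
      (∀ k : Fin N, ∀ m : ℤ, m ∈ ({-1, 0, 1} : Set ℤ) → ∀ n : ℕ,
        1 - Complex.I * (γ + (m : ℂ) * (Complex.I * (hbar : ℂ)) - lam k) / (hbar : ℂ)
          ≠ -(n : ℂ)) →
      tPoly N lam γ * (K γ / gammaDenomPlus hbar N lam γ)
        = Complex.I ^ (-(N : ℤ)) *
            (K (γ + Complex.I * (hbar : ℂ)) /
              gammaDenomPlus hbar N lam (γ + Complex.I * (hbar : ℂ))) +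
          Complex.I ^ (N : ℤ) *
            (K (γ - Complex.I * (hbar : ℂ)) /
              gammaDenomPlus hbar N lam (γ - Complex.I * (hbar : ℂ))) := by
  intro γ ht ht_add hreg
  have ht_sub_add : tPoly N lam (γ - Complex.I * hbar + Complex.I * hbar) ≠ 0 := by
    rwa [sub_add_cancel]
  have hd_sub : gammaDenomPlus hbar N lam (γ - Complex.I * hbar) ≠ 0 :=
    gammaDenomPlus_ne_zero fun k n => by
      simpa [← sub_eq_add_neg] using hreg k (-1) (by simp) n
  have hd := gammaDenomPlus_add_I_mul hhbar ht_sub_add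
  rw [sub_add_cancel] at hd
  have baxter := baxter_eq_of_recursion_of_gauge (zpow_ne_zero _ Complex.I_ne_zero) ht ht_add
    hd_sub (hK γ (mul_ne_zero ht ht_add)) hd (gammaDenomPlus_add_I_mul hhbar ht_add)
  rwa [← zpow_neg, neg_neg] at baxter
end

section
/- Let ħ > 0, let N ≥ 1 be an integer, let λ₁,…,λ_N ∈ ℂ, and set t(γ) = ∏_{k=1}^{N}(γ−λ_k). Let K : ℂ → ℂ satisfy K(γ+iħ) = K(γ) − K(γ−iħ)/(t(γ)·t(γ−iħ)) for all γ ∈ ℂ with t(γ)·t(γ−iħ) ≠ 0. Define d(γ) = ∏_{k=1}^{N} exp((iγ/ħ)·log ħ)·Γ(1 + i(γ−λ_k)/ħ) and c(γ) = K(γ)/d(γ). Then for every γ ∈ ℂ such that t(γ) ≠ 0, t(γ−iħ) ≠ 0, and such that for every k ∈ {1,…,N} and every m ∈ {−1,0,1} the number 1 + i(γ + imħ − λ_k)/ħ is not a nonpositive integer, one has t(γ)·c(γ) = i^{−N}·c(γ+iħ) + i^{N}·c(γ−iħ). -/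
open Finset

/-- The Gamma-product denominator `d(γ) = ∏ₖ ħ^{iγ/ħ} Γ(1 + i(γ-λₖ)/ħ)` of
Gutzwiller's second fundamental solution (fs). -/
noncomputable def gammaDenomMinus (hbar : ℝ) (N : ℕ) (lam : Fin N → ℂ) (γ : ℂ) : ℂ :=
  ∏ k : Fin N, Complex.exp ((Complex.I * γ / (hbar : ℂ)) * (Real.log hbar : ℂ)) *
    Complex.Gamma (1 + Complex.I * (γ - lam k) / (hbar : ℂ))

/-!
The reciprocal Gamma function is entire and satisfies `1 / Γ(s) = s / Γ(s + 1)` everywhere, so the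
reciprocal of the Gamma-product denominator satisfies the first-order difference equation
`1 / d(γ + iħ) = iᴺ t(γ) / d(γ)`. Multiplication by a solution `w` of such an equation turns the
recursion for `K` into the Baxter equation for `K w`.
-/

theorem baxter_equation_mul_of_recursion {G F : Type*} [AddGroup G] [Field F] {t w K : G → F}
    {c : F} {h x : G} (hc : c ≠ 0) (hw : ∀ y, w (y + h) = c * t y * w y)
    (ht : t x ≠ 0) (ht' : t (x - h) ≠ 0)
    (hK : K (x + h) = K x - K (x - h) / (t x * t (x - h))) :
    t x * (K x * w x) = c⁻¹ * (K (x + h) * w (x + h)) + c * (K (x - h) * w (x - h)) := by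
  have forward : c⁻¹ * w (x + h) = t x * w x := by
    rw [hw, mul_assoc, inv_mul_cancel_left₀ hc]
  have backward : c * w (x - h) = w x / t (x - h) := by
    have hx : w x = c * t (x - h) * w (x - h) := by simpa only [sub_add_cancel] using hw (x - h)
    rw [eq_div_iff ht', hx, mul_right_comm]
  calc
    t x * (K x * w x) = K (x + h) * (t x * w x) + K (x - h) * (w x / t (x - h)) := by
      rw [hK]
      field_simp
      ring
    _ = c⁻¹ * (K (x + h) * w (x + h)) + c * (K (x - h) * w (x - h)) := by
      rw [← forward, ← backward]
      ring

theorem inv_exp_sub_one_mul_Gamma (a s u : ℂ) :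
    (Complex.exp ((s - 1) * a) * Complex.Gamma u)⁻¹ =
      Complex.exp a * u * (Complex.exp (s * a) * Complex.Gamma (1 + u))⁻¹ := by
  have exp_shift : (Complex.exp ((s - 1) * a))⁻¹ = Complex.exp a * (Complex.exp (s * a))⁻¹ := by
    rw [← Complex.exp_neg, ← Complex.exp_neg, ← Complex.exp_add]
    ring_nf
  -- At a pole of `Γ`, the conventions `Γ = 0` and `0⁻¹ = 0` agree with the entire function `1 / Γ`.
  have Gamma_shift : (Complex.Gamma u)⁻¹ = u * (Complex.Gamma (1 + u))⁻¹ := by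
    rw [add_comm]
    exact Complex.one_div_Gamma_eq_self_mul_one_div_Gamma_add_one u
  rw [mul_inv, mul_inv, exp_shift, Gamma_shift, mul_mul_mul_comm]

theorem I_mul_add_I_mul_div {h : ℂ} (hh : h ≠ 0) (z : ℂ) :
    Complex.I * (z + Complex.I * h) / h = Complex.I * z / h - 1 := by
  rw [mul_add, ← mul_assoc, Complex.I_mul_I, add_div, mul_div_cancel_right₀ _ hh, sub_eq_add_neg]

theorem inv_gammaDenomMinus_add_I_mul {hbar : ℝ} (hhbar : 0 < hbar) (N : ℕ) (lam : Fin N → ℂ)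
    (γ : ℂ) :
    (gammaDenomMinus hbar N lam (γ + Complex.I * hbar))⁻¹ =
      Complex.I ^ N * tPoly N lam γ * (gammaDenomMinus hbar N lam γ)⁻¹ := by
  have hbar_ne : (hbar : ℂ) ≠ 0 := Complex.ofReal_ne_zero.mpr hhbar.ne'
  have exp_log : Complex.exp (Real.log hbar) = hbar := by
    rw [← Complex.ofReal_exp, Real.exp_log hhbar]
  have I_pow : Complex.I ^ N = ∏ _k : Fin N, Complex.I := (Fin.prod_const N Complex.I).symm
  simp only [gammaDenomMinus, tPoly]
  rw [I_pow, ← prod_inv_distrib, ← prod_inv_distrib, ← prod_mul_distrib, ← prod_mul_distrib]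
  refine prod_congr rfl fun k _ => ?_
  have Gamma_arg : 1 + Complex.I * (γ + Complex.I * hbar - lam k) / hbar =
      Complex.I * (γ - lam k) / hbar := by
    rw [add_sub_right_comm, I_mul_add_I_mul_div hbar_ne, add_sub_cancel]
  rw [Gamma_arg, I_mul_add_I_mul_div hbar_ne, inv_exp_sub_one_mul_Gamma, exp_log,
    mul_div_cancel₀ _ hbar_ne]

/-- Gutzwiller's second fundamental solution `c₋ = K₋/d` of the one-dimensional
Baxter equation (fb2), given any function `K₋` satisfying the second recursion
of (ab1a). -/
theorem gutzwiller_solution_minus (hbar : ℝ) (hhbar : 0 < hbar) (N : ℕ) (hN : 1 ≤ N)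
    (lam : Fin N → ℂ) (K : ℂ → ℂ)
    (hK : ∀ γ : ℂ, tPoly N lam γ * tPoly N lam (γ - Complex.I * (hbar : ℂ)) ≠ 0 →
      K (γ + Complex.I * (hbar : ℂ)) = K γ -
        K (γ - Complex.I * (hbar : ℂ)) /
          (tPoly N lam γ * tPoly N lam (γ - Complex.I * (hbar : ℂ)))) :
    ∀ γ : ℂ, tPoly N lam γ ≠ 0 → tPoly N lam (γ - Complex.I * (hbar : ℂ)) ≠ 0 →
      (∀ k : Fin N, ∀ m : ℤ, m ∈ ({-1, 0, 1} : Set ℤ) → ∀ n : ℕ,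
        1 + Complex.I * (γ + (m : ℂ) * (Complex.I * (hbar : ℂ)) - lam k) / (hbar : ℂ)
          ≠ -(n : ℂ)) →
      tPoly N lam γ * (K γ / gammaDenomMinus hbar N lam γ)
        = Complex.I ^ (-(N : ℤ)) *
            (K (γ + Complex.I * (hbar : ℂ)) /
              gammaDenomMinus hbar N lam (γ + Complex.I * (hbar : ℂ))) +
          Complex.I ^ (N : ℤ) *
            (K (γ - Complex.I * (hbar : ℂ)) /
              gammaDenomMinus hbar N lam (γ - Complex.I * (hbar : ℂ))) := by
  intro γ ht ht' _
  simp only [div_eq_mul_inv (K _), zpow_neg, zpow_natCast]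
  exact baxter_equation_mul_of_recursion (w := fun z => (gammaDenomMinus hbar N lam z)⁻¹)
    (pow_ne_zero N Complex.I_ne_zero)
    (inv_gammaDenomMinus_add_I_mul hhbar N lam) ht ht' (hK γ (mul_ne_zero ht ht'))
end

section
/- Let ħ > 0, let N ≥ 1 be an integer, let t : ℂ → ℂ, let δ₁,…,δ_N be pairwise distinct real numbers, let ξ ∈ ℂ, and let c₊, c₋ : ℂ → ℂ be entire functions satisfying t(γ)·c(γ) = i^{−N}·c(γ+iħ) + i^{N}·c(γ−iħ) for all γ ∈ ℂ. Assume the quantization conditions c₊(δ_k + iħn) = ξ·c₋(δ_k + iħn) for all k ∈ {1,…,N} and all n ∈ ℤ. Then there exists an entire function C : ℂ → ℂ such that C(γ)·∏_{k=1}^{N} sinh(π(γ−δ_k)/ħ) = c₊(γ) − ξ·c₋(γ) for all γ ∈ ℂ, and t(γ)·C(γ) = i^{N}·C(γ+iħ) + i^{−N}·C(γ−iħ) for every γ with ∏_{k=1}^{N} sinh(π(γ−δ_k)/ħ) ≠ 0. -/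
open Finset

/-- The denominator `∏ₖ sinh(π(γ-δₖ)/ħ)` of the Pasquier-Gaudin solution. -/
noncomputable def sinhProd (hbar : ℝ) (N : ℕ) (δ : Fin N → ℝ) (γ : ℂ) : ℂ :=
  ∏ k : Fin N, Complex.sinh ((Real.pi : ℂ) * (γ - (δ k : ℂ)) / (hbar : ℂ))

/-!
The combination `f = c₊ - ξc₋` is an entire solution of (fb2), and each factor of
`S(γ) = ∏ₖ sinh(π(γ-δₖ)/ħ)` changes sign under `γ ↦ γ ± iħ`. Dividing by `S` therefore multiplies
both shift coefficients of the Baxter equation by `(-1)^N`, which interchanges `i^N` and `i^{-N}`.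
The order of `S` at `z` is the number of nodes `δₖ` congruent to `z` modulo `iħℤ`, so `f / S` is
entire as soon as `f` vanishes to at least that order at every point; for distinct real nodes this
number is at most one, and the vanishing is the quantization condition.
-/

section Division

open scoped Topology

variable {𝕜 : Type*} [NontriviallyNormedField 𝕜]

theorem eventuallyEq_div_mul_self_of_analyticOrderAt_le {f S : 𝕜 → 𝕜} {z : 𝕜}
    (hS : AnalyticAt 𝕜 S z) (hle : analyticOrderAt S z ≤ analyticOrderAt f z) :
    f / S * S =ᶠ[𝓝[≠] z] f := by
  rcases hS.eventually_eq_zero_or_eventually_ne_zero with hS_zero | hS_ne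
  · have hf_zero : ∀ᶠ w in 𝓝 z, f w = 0 :=
      analyticOrderAt_eq_top.1 (top_le_iff.1 (analyticOrderAt_eq_top.2 hS_zero ▸ hle))
    filter_upwards [hf_zero.filter_mono nhdsWithin_le_nhds] with w hw
    simp [hw]
  · filter_upwards [hS_ne] with w hw
    simp [hw]

theorem meromorphicOrderAt_div_nonneg_of_analyticOrderAt_le {f S : 𝕜 → 𝕜} {z : 𝕜}
    (hf : AnalyticAt 𝕜 f z) (hS : AnalyticAt 𝕜 S z)
    (hle : analyticOrderAt S z ≤ analyticOrderAt f z) :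
    0 ≤ meromorphicOrderAt (f / S) z := by
  rw [div_eq_mul_inv, meromorphicOrderAt_mul hf.meromorphicAt hS.meromorphicAt.inv,
    meromorphicOrderAt_inv, hf.meromorphicOrderAt_eq, hS.meromorphicOrderAt_eq]
  generalize analyticOrderAt S z = m at hle
  generalize analyticOrderAt f z = n at hle
  induction n with
  | top => simp
  | coe n =>
    lift m to ℕ using ne_top_of_le_ne_top (ENat.natCast_ne_top n) hle
    have hsub : (0 : ℤ) ≤ n - m := sub_nonneg.2 (by exact_mod_cast hle)
    simpa only [ENat.map_natCast, ← sub_eq_add_neg] using! WithTop.coe_nonneg.2 hsub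

theorem exists_analyticOnNhd_mul_eqOn {f S : 𝕜 → 𝕜} {U : Set 𝕜}
    (hf : AnalyticOnNhd 𝕜 f U) (hS : AnalyticOnNhd 𝕜 S U)
    (hle : ∀ z ∈ U, analyticOrderAt S z ≤ analyticOrderAt f z) :
    ∃ C : 𝕜 → 𝕜, AnalyticOnNhd 𝕜 C U ∧ Set.EqOn (C * S) f U := by
  have hmer : MeromorphicOn (f / S) U := hf.meromorphicOn.div hS.meromorphicOn
  have hC : AnalyticOnNhd 𝕜 (toMeromorphicNFOn (f / S) U) U := fun z hz => by
    rw [← (meromorphicNFOn_toMeromorphicNFOn (f / S) U hz).meromorphicOrderAt_nonneg_iff_analyticAt,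
      meromorphicOrderAt_toMeromorphicNFOn hmer hz]
    exact meromorphicOrderAt_div_nonneg_of_analyticOrderAt_le (hf z hz) (hS z hz) (hle z hz)
  refine ⟨_, hC, fun z hz => ?_⟩
  have hpunct : toMeromorphicNFOn (f / S) U * S =ᶠ[𝓝[≠] z] f := by
    refine .trans ?_ (eventuallyEq_div_mul_self_of_analyticOrderAt_le (hS z hz) (hle z hz))
    exact (hmer.toMeromorphicNFOn_eq_self_on_nhdsNE hz).mul .rfl
  exact (((hC z hz).mul (hS z hz)).continuousAt.eventuallyEq_nhds_iff_eventuallyEq_nhdsNE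
    (hf z hz).continuousAt |>.1 hpunct).eq_of_nhds

theorem exists_differentiable_mul_eq_of_analyticOrderAt_le {f S : ℂ → ℂ}
    (hf : Differentiable ℂ f) (hS : Differentiable ℂ S)
    (hle : ∀ z, analyticOrderAt S z ≤ analyticOrderAt f z) :
    ∃ C : ℂ → ℂ, Differentiable ℂ C ∧ C * S = f := by
  obtain ⟨C, hC, hCS⟩ := exists_analyticOnNhd_mul_eqOn (U := Set.univ)
    (fun z _ => hf.analyticAt z) (fun z _ => hS.analyticAt z) fun z _ => hle z
  exact ⟨C, fun z => (hC z trivial).differentiableAt, Set.eqOn_univ _ _ |>.1 hCS⟩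

theorem analyticOrderAt_finsetProd {ι : Type*} {s : Finset ι} {g : ι → 𝕜 → 𝕜} {z : 𝕜}
    (hg : ∀ k ∈ s, AnalyticAt 𝕜 (g k) z) :
    analyticOrderAt (fun w => ∏ k ∈ s, g k w) z = ∑ k ∈ s, analyticOrderAt (g k) z := by
  classical
  induction s using Finset.induction_on with
  | empty => simp [analyticAt_const.analyticOrderAt_eq_zero]
  | insert k s hk ih =>
    simp only [Finset.forall_mem_insert] at hg
    simp only [Finset.prod_insert hk, Finset.sum_insert hk, ← ih hg.2]
    exact analyticOrderAt_mul hg.1 (s.analyticAt_fun_prod hg.2)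

end Division

section Baxter

variable {G R : Type*} [AddGroup G] [CommRing R]

/-- The Baxter equation `t(γ)c(γ) = a·c(γ+η) + b·c(γ-η)` at the point `γ`; (fb2) and (fb1) are the
cases `η = iħ` with `(a, b) = (i^{-N}, i^N)` and `(a, b) = (i^N, i^{-N})`. -/
def IsBaxterSolutionAt (η : G) (a b : R) (t c : G → R) (γ : G) : Prop :=
  t γ * c γ = a * c (γ + η) + b * c (γ - η)

namespace IsBaxterSolutionAt

variable {η γ : G} {a b : R} {t : G → R}

theorem sub_const_mul {c d : G → R} (hc : IsBaxterSolutionAt η a b t c γ)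
    (hd : IsBaxterSolutionAt η a b t d γ) (ξ : R) :
    IsBaxterSolutionAt η a b t (fun x => c x - ξ * d x) γ := by
  unfold IsBaxterSolutionAt at *
  linear_combination hc - ξ * hd

theorem of_mul_right [NoZeroDivisors R] {C S : G → R} {ε : R}
    (h : IsBaxterSolutionAt η a b t (C * S) γ) (hadd : S (γ + η) = ε * S γ)
    (hsub : S (γ - η) = ε * S γ) (hne : S γ ≠ 0) :
    IsBaxterSolutionAt η (ε * a) (ε * b) t C γ := by
  simp only [IsBaxterSolutionAt, Pi.mul_apply, hadd, hsub] at h ⊢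
  apply mul_right_cancel₀ hne
  linear_combination h

end IsBaxterSolutionAt

end Baxter

theorem sinh_eq_zero_iff_exists_int_mul_pi_mul_I {z : ℂ} :
    Complex.sinh z = 0 ↔ ∃ n : ℤ, z = n * (Real.pi * Complex.I) := by
  rw [← neg_eq_zero, ← Complex.sinh_neg, ← mul_left_inj' Complex.I_ne_zero, zero_mul,
    ← Complex.sin_mul_I, Complex.sin_eq_zero_iff]
  refine exists_congr fun n => ?_
  constructor <;> intro h
  · linear_combination Complex.I * h + z * Complex.I_sq
  · linear_combination (-Complex.I) * h - n * Real.pi * Complex.I_sq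

section SinhFactor

variable {hbar : ℂ}

theorem sinh_pi_mul_sub_div_eq_zero_iff (hhbar : hbar ≠ 0) {d z : ℂ} :
    Complex.sinh (Real.pi * (z - d) / hbar) = 0 ↔ ∃ n : ℤ, z = d + Complex.I * hbar * n := by
  have hpi : (Real.pi : ℂ) ≠ 0 := Complex.ofReal_ne_zero.2 Real.pi_ne_zero
  rw [sinh_eq_zero_iff_exists_int_mul_pi_mul_I]
  refine exists_congr fun n => ?_
  rw [div_eq_iff hhbar, ← mul_right_inj' hpi (b := z)]
  constructor <;> intro h <;> linear_combination h

theorem antiperiodic_sinh_pi_mul_sub_div (hhbar : hbar ≠ 0) (d : ℂ) :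
    Function.Antiperiodic (fun z : ℂ => Complex.sinh (Real.pi * (z - d) / hbar))
      (Complex.I * hbar) := fun z => by
  have hshift : Real.pi * (z + Complex.I * hbar - d) / hbar =
      Real.pi * (z - d) / hbar + Real.pi * Complex.I := by
    field_simp
    ring
  simp only [hshift, Complex.sinh_add_pi_mul_I]

theorem analyticAt_sinh_pi_mul_sub_div (d z : ℂ) :
    AnalyticAt ℂ (fun w : ℂ => Complex.sinh (Real.pi * (w - d) / hbar)) z :=
  Differentiable.analyticAt (by fun_prop) z

open Classical in
theorem analyticOrderAt_sinh_pi_mul_sub_div (hhbar : hbar ≠ 0) (d z : ℂ) :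
    analyticOrderAt (fun w : ℂ => Complex.sinh (Real.pi * (w - d) / hbar)) z =
      if ∃ n : ℤ, z = d + Complex.I * hbar * n then 1 else 0 := by
  rw [← sinh_pi_mul_sub_div_eq_zero_iff hhbar]
  split_ifs with hzero
  · have hderiv : HasDerivAt (fun w : ℂ => Complex.sinh (Real.pi * (w - d) / hbar))
        (Complex.cosh (Real.pi * (z - d) / hbar) * (Real.pi / hbar)) z := by
      simpa using ((((hasDerivAt_id z).sub_const d).const_mul (Real.pi : ℂ)).div_const hbar).csinh
    have hcosh : Complex.cosh (Real.pi * (z - d) / hbar) ≠ 0 := fun hcosh => by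
      simpa [hcosh, hzero] using Complex.cosh_sq_sub_sinh_sq (Real.pi * (z - d) / hbar)
    refine (analyticAt_sinh_pi_mul_sub_div d z).analyticOrderAt_eq_one_of_zero_deriv_ne_zero
      hzero ?_
    rw [hderiv.deriv]
    exact mul_ne_zero hcosh (div_ne_zero (Complex.ofReal_ne_zero.2 Real.pi_ne_zero) hhbar)
  · exact (analyticAt_sinh_pi_mul_sub_div d z).analyticOrderAt_eq_zero.2 hzero

end SinhFactor

section NodeProduct

variable {ι : Type*} {hbar : ℂ} {δ : ι → ℂ}

/-- The product `∏ₖ sinh(π(γ-δₖ)/ħ)` over a finite family of complex nodes, which need not be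
distinct, for complex `ħ`; `sinhProd` is the case of real nodes and real `ħ`. -/
noncomputable def sinhNodeProd [Fintype ι] (hbar : ℂ) (δ : ι → ℂ) (γ : ℂ) : ℂ :=
  ∏ k, Complex.sinh (Real.pi * (γ - δ k) / hbar)

/-- The number of indices `k` with `z ≡ δₖ` modulo `iħℤ`, the order to which a numerator has to
vanish at `z`. It counts coinciding nodes separately, and is `ℕ∞`-valued to be compared with
`analyticOrderAt`. -/
noncomputable def nodeMultiplicity (hbar : ℂ) (δ : ι → ℂ) (z : ℂ) : ℕ∞ :=
  {k | ∃ n : ℤ, z = δ k + Complex.I * hbar * n}.encard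

theorem differentiable_sinhNodeProd [Fintype ι] (hbar : ℂ) (δ : ι → ℂ) :
    Differentiable ℂ (sinhNodeProd hbar δ) := by
  unfold sinhNodeProd
  fun_prop

theorem analyticOrderAt_sinhNodeProd [Fintype ι] (hhbar : hbar ≠ 0) (z : ℂ) :
    analyticOrderAt (sinhNodeProd hbar δ) z = nodeMultiplicity hbar δ z := by
  classical
  unfold sinhNodeProd nodeMultiplicity
  rw [analyticOrderAt_finsetProd fun k _ => analyticAt_sinh_pi_mul_sub_div (δ k) z]
  simp only [analyticOrderAt_sinh_pi_mul_sub_div hhbar, Finset.sum_boole]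
  rw [← Set.encard_coe_eq_coe_finsetCard, Finset.coe_filter_univ]

theorem sinhNodeProd_add_I_mul [Fintype ι] (hhbar : hbar ≠ 0) (γ : ℂ) :
    sinhNodeProd hbar δ (γ + Complex.I * hbar) =
      (-1) ^ Fintype.card ι * sinhNodeProd hbar δ γ := by
  simp only [sinhNodeProd, antiperiodic_sinh_pi_mul_sub_div hhbar _ γ, Finset.prod_neg,
    Finset.card_univ]

theorem sinhNodeProd_sub_I_mul [Fintype ι] (hhbar : hbar ≠ 0) (γ : ℂ) :
    sinhNodeProd hbar δ (γ - Complex.I * hbar) =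
      (-1) ^ Fintype.card ι * sinhNodeProd hbar δ γ := by
  simp only [sinhNodeProd, (antiperiodic_sinh_pi_mul_sub_div hhbar _).sub_eq γ, Finset.prod_neg,
    Finset.card_univ]

theorem nodeMultiplicity_ofReal_le_one_of_injective {hbar : ℝ} {δ : ι → ℝ}
    (hδ : Function.Injective δ) (z : ℂ) :
    nodeMultiplicity hbar (fun k => (δ k : ℂ)) z ≤ 1 := by
  refine Set.encard_le_one_iff.2 fun j k ⟨m, hm⟩ ⟨n, hn⟩ => hδ ?_
  simpa using congrArg Complex.re (hm.symm.trans hn)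

theorem nodeMultiplicity_le_analyticOrderAt_of_le_one {f : ℂ → ℂ} {z : ℂ} (hf : AnalyticAt ℂ f z)
    (hzero : ∀ k, ∀ n : ℤ, f (δ k + Complex.I * hbar * n) = 0)
    (hsimple : nodeMultiplicity hbar δ z ≤ 1) :
    nodeMultiplicity hbar δ z ≤ analyticOrderAt f z := by
  rcases Set.eq_empty_or_nonempty {k | ∃ n : ℤ, z = δ k + Complex.I * hbar * n} with
    hnone | ⟨k, n, rfl⟩
  · simp [nodeMultiplicity, hnone]
  · exact hsimple.trans (Order.one_le_iff_ne_zero.2 (hf.analyticOrderAt_ne_zero.2 (hzero k n)))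

end NodeProduct

theorem neg_one_pow_mul_I_zpow_neg (N : ℕ) :
    (-1) ^ N * Complex.I ^ (-(N : ℤ)) = Complex.I ^ (N : ℤ) := by
  rw [zpow_neg, zpow_natCast, ← inv_pow, Complex.inv_I, ← mul_pow, neg_one_mul, neg_neg]

theorem neg_one_pow_mul_I_zpow (N : ℕ) :
    (-1) ^ N * Complex.I ^ (N : ℤ) = Complex.I ^ (-(N : ℤ)) := by
  rw [zpow_neg, zpow_natCast, ← inv_pow, Complex.inv_I, ← mul_pow, neg_one_mul]

theorem pasquier_gaudin_entire_solution_general {ι : Type*} [Fintype ι] {hbar : ℂ}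
    (hhbar : hbar ≠ 0) {a b ξ : ℂ} {t cp cm : ℂ → ℂ} {δ : ι → ℂ}
    (hcp : Differentiable ℂ cp) (hcm : Differentiable ℂ cm)
    (hp : ∀ γ, IsBaxterSolutionAt (Complex.I * hbar) a b t cp γ)
    (hm : ∀ γ, IsBaxterSolutionAt (Complex.I * hbar) a b t cm γ)
    (hq : ∀ z, nodeMultiplicity hbar δ z ≤ analyticOrderAt (fun γ => cp γ - ξ * cm γ) z) :
    ∃ C : ℂ → ℂ, Differentiable ℂ C ∧
      (∀ γ, C γ * sinhNodeProd hbar δ γ = cp γ - ξ * cm γ) ∧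
      ∀ γ, sinhNodeProd hbar δ γ ≠ 0 →
        IsBaxterSolutionAt (Complex.I * hbar) ((-1) ^ Fintype.card ι * a)
          ((-1) ^ Fintype.card ι * b) t C γ := by
  obtain ⟨C, hC, hCS⟩ := exists_differentiable_mul_eq_of_analyticOrderAt_le
    (hcp.sub (hcm.const_mul ξ)) (differentiable_sinhNodeProd hbar δ)
    fun z => (analyticOrderAt_sinhNodeProd hhbar z).trans_le (hq z)
  refine ⟨C, hC, congrFun hCS, fun γ hγ => ?_⟩
  have hcomb : IsBaxterSolutionAt (Complex.I * hbar) a b t (C * sinhNodeProd hbar δ) γ :=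
    hCS ▸ (hp γ).sub_const_mul (hm γ) ξ
  exact hcomb.of_mul_right (sinhNodeProd_add_I_mul hhbar γ) (sinhNodeProd_sub_I_mul hhbar γ) hγ

/-- The Pasquier-Gaudin construction (true1)/(pg2) combined with the pole-cancellation
conditions (q1): the quotient `(c₊ - ξc₋)/∏ sinh` extends to an entire solution of the
Baxter equation (fb1). -/
theorem pasquier_gaudin_entire_solution (hbar : ℝ) (hhbar : 0 < hbar)
    (N : ℕ) (hN : 1 ≤ N) (t : ℂ → ℂ) (δ : Fin N → ℝ)
    (hδ : Function.Injective δ) (ξ : ℂ) (cp cm : ℂ → ℂ)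
    (hcp : Differentiable ℂ cp) (hcm : Differentiable ℂ cm)
    (hp : ∀ γ : ℂ, t γ * cp γ =
      Complex.I ^ (-(N : ℤ)) * cp (γ + Complex.I * (hbar : ℂ)) +
      Complex.I ^ (N : ℤ) * cp (γ - Complex.I * (hbar : ℂ)))
    (hm : ∀ γ : ℂ, t γ * cm γ =
      Complex.I ^ (-(N : ℤ)) * cm (γ + Complex.I * (hbar : ℂ)) +
      Complex.I ^ (N : ℤ) * cm (γ - Complex.I * (hbar : ℂ)))
    (hq : ∀ k : Fin N, ∀ n : ℤ,
      cp ((δ k : ℂ) + Complex.I * (hbar : ℂ) * (n : ℂ)) =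
        ξ * cm ((δ k : ℂ) + Complex.I * (hbar : ℂ) * (n : ℂ))) :
    ∃ C : ℂ → ℂ, Differentiable ℂ C ∧
      (∀ γ : ℂ, C γ * sinhProd hbar N δ γ = cp γ - ξ * cm γ) ∧
      (∀ γ : ℂ, sinhProd hbar N δ γ ≠ 0 →
        t γ * C γ = Complex.I ^ (N : ℤ) * C (γ + Complex.I * (hbar : ℂ)) +
          Complex.I ^ (-(N : ℤ)) * C (γ - Complex.I * (hbar : ℂ))) := by
  have hmult (z : ℂ) := nodeMultiplicity_le_analyticOrderAt_of_le_one
    ((hcp.sub (hcm.const_mul ξ)).analyticAt z) (fun k n => sub_eq_zero.2 (hq k n))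
    (nodeMultiplicity_ofReal_le_one_of_injective hδ z)
  simpa only [IsBaxterSolutionAt, sinhProd, sinhNodeProd, Fintype.card_fin,
    neg_one_pow_mul_I_zpow_neg, neg_one_pow_mul_I_zpow] using
    pasquier_gaudin_entire_solution_general (Complex.ofReal_ne_zero.2 hhbar.ne') hcp hcm hp hm hmult
end
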